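/- For every form F of degree d in ℂ[x,y,z] and every 0 < a < d, there exist forms F₁, F₂ of degree a and G₁, G₂ of degree d − a such that F = F₁G₁ + F₂G₂. -/

import Mathlib

open MvPolynomial

/-!
For distinct scalars `r`, the product `∏ (x - r y)` of `d` lines through a point can be written as
`U V + P Q` in such a way that `U, P, V, Q` generate all forms of degree `d`. Then the derivative of
`(F₁, F₂, G₁, G₂) ↦ F₁ G₁ + F₂ G₂` at `(U, P, V, Q)` is surjective, so every deformation of
`∏ (x - r y)` over `K⟦t⟧` is again a sum of two products, and decompositions over an extension of
`K` specialize to `K` by the Nullstellensatz.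

If a line meets the curve `F = 0` in `d` distinct points, then projecting to this line from a point
off it degenerates `F` to such a product of concurrent lines. An irreducible `F` has such a line:
the generic line through a point off the curve. Reducible forms follow by induction on the degree.
-/

section HomogeneousFactors

variable {σ R : Type*} [CommSemiring R]

lemma mvPowerSeries_order_mul [NoZeroDivisors R] {f g : MvPowerSeries σ R} (hf : f ≠ 0)
    (hg : g ≠ 0) : (f * g).order = f.order + g.order := by
  obtain ⟨i, hi⟩ := ENat.ne_top_iff_exists.1 (mt MvPowerSeries.order_eq_top_iff.1 hf)
  obtain ⟨j, hj⟩ := ENat.ne_top_iff_exists.1 (mt MvPowerSeries.order_eq_top_iff.1 hg)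
  refine le_antisymm ?_ MvPowerSeries.le_order_mul
  by_contra! hlt
  rw [← hi, ← hj, ← Nat.cast_add] at hlt
  have hzero := MvPowerSeries.homogeneousComponent_of_lt_order_eq_zero hlt
  rw [MvPowerSeries.homogeneousComponent_mul_of_le_order hi.le hj.le] at hzero
  exact mul_ne_zero (MvPowerSeries.homogeneousComponent_of_order hi)
    (MvPowerSeries.homogeneousComponent_of_order hj) hzero

lemma order_coe_le_totalDegree {p : MvPolynomial σ R} (hp : p ≠ 0) :
    (p : MvPowerSeries σ R).order ≤ p.totalDegree := by
  obtain ⟨m, hm⟩ := ne_zero_iff.1 hp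
  exact (MvPowerSeries.order_le (by rwa [coeff_coe])).trans
    (Nat.cast_le.2 (le_totalDegree (mem_support_iff.2 hm)))

lemma isHomogeneous_iff_le_order {p : MvPolynomial σ R} {n : ℕ} (hdeg : p.totalDegree ≤ n) :
    p.IsHomogeneous n ↔ n ≤ (p : MvPowerSeries σ R).order := by
  refine ⟨fun h => MvPowerSeries.nat_le_order fun m hm => ?_, fun h m hm => ?_⟩
  · rw [coeff_coe, h.coeff_eq_zero hm.ne]
  · suffices m.degree = n by rwa [Finsupp.degree_eq_weight_one] at this
    refine le_antisymm ((le_totalDegree (mem_support_iff.2 hm)).trans hdeg) ?_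
    exact_mod_cast h.trans (MvPowerSeries.order_le (by rwa [coeff_coe]))

lemma exists_isHomogeneous_of_mul [IsDomain R] {p q : MvPolynomial σ R} {n : ℕ}
    (h : (p * q).IsHomogeneous n) (hp : p ≠ 0) (hq : q ≠ 0) :
    ∃ i j, i + j = n ∧ p.IsHomogeneous i ∧ q.IsHomogeneous j := by
  have hdeg : p.totalDegree + q.totalDegree = n := by
    rw [← totalDegree_mul_of_isDomain hp hq, h.totalDegree (mul_ne_zero hp hq)]
  have hord : n ≤ (p : MvPowerSeries σ R).order + (q : MvPowerSeries σ R).order := by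
    rw [← mvPowerSeries_order_mul (by simpa using hp) (by simpa using hq), ← coe_mul]
    exact (isHomogeneous_iff_le_order h.totalDegree_le).1 h
  have hpord := order_coe_le_totalDegree hp
  have hqord := order_coe_le_totalDegree hq
  refine ⟨_, _, hdeg, (isHomogeneous_iff_le_order le_rfl).2 ?_,
    (isHomogeneous_iff_le_order le_rfl).2 ?_⟩
  all_goals
    generalize (p : MvPowerSeries σ R).order = i at *
    generalize (q : MvPowerSeries σ R).order = j at *
    subst hdeg
    enat_to_nat
    omega

lemma isHomogeneous_right_of_mul [IsDomain R] {p q : MvPolynomial σ R} {i j : ℕ} (hp : p ≠ 0)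
    (hpi : p.IsHomogeneous i) (h : (p * q).IsHomogeneous (i + j)) : q.IsHomogeneous j := by
  rcases eq_or_ne q 0 with rfl | hq
  · exact isHomogeneous_zero _ _ _
  · obtain ⟨i', j', hij, hpi', hqj'⟩ := exists_isHomogeneous_of_mul h hp hq
    obtain rfl := hpi.inj_right hpi' hp
    rwa [← Nat.add_left_cancel hij]

end HomogeneousFactors

lemma isHomogeneous_bind₁ {σ τ R : Type*} [CommSemiring R] {n : ℕ} {F : MvPolynomial σ R}
    (hF : F.IsHomogeneous n) {f : σ → MvPolynomial τ R} (hf : ∀ i, (f i).IsHomogeneous 1) :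
    (bind₁ f F).IsHomogeneous n := by
  simpa only [aeval_eq_bind₁, one_mul] using hF.aeval f hf

lemma bind₁_toMvPolynomial_comp_of_mul_eq_one {σ R : Type*} [CommSemiring R] [Fintype σ]
    [DecidableEq σ] {M N : Matrix σ σ R} (h : M * N = 1) :
    (bind₁ N.toMvPolynomial).comp (bind₁ M.toMvPolynomial) = AlgHom.id R (MvPolynomial σ R) := by
  rw [bind₁_comp_bind₁, ← funext (Matrix.toMvPolynomial_mul M N), h, Matrix.toMvPolynomial_one]
  exact bind₁_X_left

/-- `F` is a sum of two products of a form of degree `a` and a form of degree `b`. -/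
def IsSumOfTwoProducts {σ R : Type*} [CommSemiring R] (a b : ℕ) (F : MvPolynomial σ R) : Prop :=
  ∃ F₁ F₂ G₁ G₂ : MvPolynomial σ R, F₁.IsHomogeneous a ∧ F₂.IsHomogeneous a ∧
    G₁.IsHomogeneous b ∧ G₂.IsHomogeneous b ∧ F = F₁ * G₁ + F₂ * G₂

namespace IsSumOfTwoProducts

section Basic

variable {σ R : Type*} [CommSemiring R] {a b c : ℕ} {F G : MvPolynomial σ R}

lemma symm (h : IsSumOfTwoProducts a b F) : IsSumOfTwoProducts b a F := by
  obtain ⟨F₁, F₂, G₁, G₂, hF₁, hF₂, hG₁, hG₂, rfl⟩ := h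
  exact ⟨G₁, G₂, F₁, F₂, hG₁, hG₂, hF₁, hF₂, by ring⟩

lemma mul (hF : F.IsHomogeneous a) (hG : G.IsHomogeneous b) : IsSumOfTwoProducts a b (F * G) :=
  ⟨F, 0, G, 0, hF, isHomogeneous_zero _ _ _, hG, isHomogeneous_zero _ _ _, by ring⟩

lemma mul_left (hG : G.IsHomogeneous c) (h : IsSumOfTwoProducts a b F) :
    IsSumOfTwoProducts (c + a) b (G * F) := by
  obtain ⟨F₁, F₂, G₁, G₂, hF₁, hF₂, hG₁, hG₂, rfl⟩ := h
  exact ⟨G * F₁, G * F₂, G₁, G₂, hG.mul hF₁, hG.mul hF₂, hG₁, hG₂, by ring⟩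

lemma map {S : Type*} [CommSemiring S] (f : R →+* S) (h : IsSumOfTwoProducts a b F) :
    IsSumOfTwoProducts a b (F.map f) := by
  obtain ⟨F₁, F₂, G₁, G₂, hF₁, hF₂, hG₁, hG₂, rfl⟩ := h
  exact ⟨F₁.map f, F₂.map f, G₁.map f, G₂.map f, hF₁.map f, hF₂.map f, hG₁.map f, hG₂.map f,
    by simp⟩

variable {τ : Type*}

lemma linearSubst {f : σ → MvPolynomial τ R} (hf : ∀ i, (f i).IsHomogeneous 1)
    (h : IsSumOfTwoProducts a b F) : IsSumOfTwoProducts a b (bind₁ f F) := by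
  obtain ⟨F₁, F₂, G₁, G₂, hF₁, hF₂, hG₁, hG₂, rfl⟩ := h
  exact ⟨_, _, _, _, isHomogeneous_bind₁ hF₁ hf, isHomogeneous_bind₁ hF₂ hf,
    isHomogeneous_bind₁ hG₁ hf, isHomogeneous_bind₁ hG₂ hf, by simp only [map_add, map_mul]⟩

lemma of_bind₁_toMvPolynomial [Fintype σ] [DecidableEq σ] {M : Matrix σ σ R} (hM : IsUnit M)
    (h : IsSumOfTwoProducts a b (bind₁ M.toMvPolynomial F)) :
    IsSumOfTwoProducts a b F := by
  obtain ⟨N, hMN⟩ := hM.exists_right_inv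
  have hinv : bind₁ N.toMvPolynomial (bind₁ M.toMvPolynomial F) = F :=
    AlgHom.congr_fun (bind₁_toMvPolynomial_comp_of_mul_eq_one hMN) F
  exact hinv ▸ h.linearSubst N.toMvPolynomial_isHomogeneous

end Basic

end IsSumOfTwoProducts

section Descent

lemma nonempty_algHom_of_finiteType (K A : Type*) [Field K] [IsAlgClosed K] [CommRing A]
    [Nontrivial A] [Algebra K A] [Algebra.FiniteType K A] : Nonempty (A →ₐ[K] K) := by
  obtain ⟨m, hm⟩ := Ideal.exists_maximal A
  let := Ideal.Quotient.field m
  have : Module.Finite K (A ⧸ m) := finite_of_finite_type_of_isJacobsonRing K (A ⧸ m)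
  exact ⟨(IsAlgClosed.lift : A ⧸ m →ₐ[K] K).comp (Ideal.Quotient.mkₐ K m)⟩

lemma IsSumOfTwoProducts.of_map_algebraMap {σ K : Type*} (L : Type*) [Field K] [IsAlgClosed K]
    [CommRing L] [Nontrivial L] [Algebra K L] {a b : ℕ} {F : MvPolynomial σ K}
    (h : IsSumOfTwoProducts a b (F.map (algebraMap K L))) : IsSumOfTwoProducts a b F := by
  classical
  obtain ⟨F₁, F₂, G₁, G₂, hF₁, hF₂, hG₁, hG₂, hF⟩ := h
  let s : Finset L := F₁.coeffs ∪ F₂.coeffs ∪ G₁.coeffs ∪ G₂.coeffs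
  let A := Algebra.adjoin K (s : Set L)
  have : Algebra.FiniteType K A := A.fg_iff_finiteType.1 ⟨s, rfl⟩
  obtain ⟨φ⟩ := nonempty_algHom_of_finiteType K A
  have hinj : Function.Injective (algebraMap A L) := Subtype.val_injective
  have lift {p : MvPolynomial σ L} (hp : p.coeffs ⊆ s) :
      ∃ q, p = MvPolynomial.map (algebraMap A L) q := by
    obtain ⟨q, hq⟩ := mem_range_map_iff_coeffs_subset (f := algebraMap A L) |>.2 fun c hc =>
      ⟨⟨c, Algebra.subset_adjoin (Finset.mem_coe.2 (hp hc))⟩, rfl⟩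
    exact ⟨q, hq.symm⟩
  obtain ⟨p₁, hp₁⟩ := lift (p := F₁) (by grind)
  obtain ⟨p₂, hp₂⟩ := lift (p := F₂) (by grind)
  obtain ⟨q₁, hq₁⟩ := lift (p := G₁) (by grind)
  obtain ⟨q₂, hq₂⟩ := lift (p := G₂) (by grind)
  rw [hp₁, hp₂, hq₁, hq₂] at hF
  have hA : IsSumOfTwoProducts a b (F.map (algebraMap K A)) := by
    refine ⟨p₁, p₂, q₁, q₂, .of_map hinj (hp₁ ▸ hF₁), .of_map hinj (hp₂ ▸ hF₂),
      .of_map hinj (hq₁ ▸ hG₁), .of_map hinj (hq₂ ▸ hG₂), map_injective _ hinj ?_⟩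
    simpa only [map_map, map_add, map_mul, ← IsScalarTower.algebraMap_eq K A L] using hF
  have hφ := hA.map φ.toRingHom
  rwa [MvPolynomial.map_map, show φ.toRingHom.comp (algebraMap K A) = RingHom.id K from
    φ.comp_algebraMap, MvPolynomial.map_id] at hφ

end Descent

section FormalLifting

open Finset.HasAntidiagonal (antidiagonal)

variable {R E E' G : Type*} [CommSemiring R] [AddCommMonoid E] [Module R E] [AddCommMonoid E']
  [Module R E'] [AddCommGroup G] [Module R G]

/-- Newton's method for power series: the coefficients are found one at a time, since the
coefficient of `tⁿ` enters the `n`-th equation only through the derivative at `(x₀, y₀)`. -/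
lemma exists_sum_antidiagonal_eq_of_surjective (B : E →ₗ[R] E' →ₗ[R] G) {x₀ : E} {y₀ : E'}
    (hsurj : ∀ c, ∃ x y, B x₀ y + B x y₀ = c) {c : ℕ → G} (hc : c 0 = B x₀ y₀) :
    ∃ (x : ℕ → E) (y : ℕ → E'), ∀ n, ∑ ij ∈ antidiagonal n, B (x ij.1) (y ij.2) = c n := by
  choose solX solY hsol using hsurj
  let next (n : ℕ) (prev : ∀ m < n, E × E') : E × E' :=
    if n = 0 then (x₀, y₀) else
      let rest := c n - ∑ ij ∈ antidiagonal n,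
        if h : ij.1 < n ∧ ij.2 < n then B (prev ij.1 h.1).1 (prev ij.2 h.2).2 else 0
      (solX rest, solY rest)
  let u : ℕ → E × E' := wellFounded_lt.fix next
  have u_eq (n : ℕ) : u n = next n fun m _ => u m := wellFounded_lt.fix_eq next n
  have u_zero : u 0 = (x₀, y₀) := by rw [u_eq]; rfl
  refine ⟨fun n => (u n).1, fun n => (u n).2, fun n => ?_⟩
  rcases n.eq_zero_or_pos with rfl | hn
  · simp [u_zero, hc]
  have hsplit : ∑ ij ∈ antidiagonal n, B (u ij.1).1 (u ij.2).2 =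
      (B x₀ (u n).2 + B (u n).1 y₀) + ∑ ij ∈ antidiagonal n,
        if ij.1 < n ∧ ij.2 < n then B (u ij.1).1 (u ij.2).2 else 0 := by
    have hends : (antidiagonal n).filter (fun ij => ¬(ij.1 < n ∧ ij.2 < n)) = {(0, n), (n, 0)} := by
      ext ⟨i, j⟩
      simp only [Finset.mem_filter, Finset.HasAntidiagonal.mem_antidiagonal, Finset.mem_insert,
        Finset.mem_singleton, Prod.mk.injEq]
      omega
    rw [← Finset.sum_filter, ← Finset.sum_filter_not_add_sum_filter _ fun ij => ij.1 < n ∧ ij.2 < n,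
      hends, Finset.sum_pair (by simp [hn.ne]), u_zero]
  have hlin : B x₀ (u n).2 + B (u n).1 y₀ = c n - ∑ ij ∈ antidiagonal n,
        if ij.1 < n ∧ ij.2 < n then B (u ij.1).1 (u ij.2).2 else 0 := by
    rw [u_eq n]
    simp only [next, if_neg hn.ne', dite_eq_ite]
    exact hsol _
  rw [hsplit, hlin, sub_add_cancel]

end FormalLifting

section PowerSeriesCoefficients

open Finset.HasAntidiagonal (antidiagonal)

variable {σ R : Type*} [CommSemiring R]

/-- `f = ∑ n, c n * tⁿ`, where `t` is the variable of the power series coefficients of `f`. -/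
def HasExpansion (f : MvPolynomial σ (PowerSeries R)) (c : ℕ → MvPolynomial σ R) : Prop :=
  ∀ n m, PowerSeries.coeff n (coeff m f) = coeff m (c n)

namespace HasExpansion

variable {f g : MvPolynomial σ (PowerSeries R)} {c e : ℕ → MvPolynomial σ R}

lemma eq (hf : HasExpansion f c) (hg : HasExpansion g c) : f = g :=
  MvPolynomial.ext _ _ fun m => PowerSeries.ext fun n => by rw [hf, hg]

lemma add (hf : HasExpansion f c) (hg : HasExpansion g e) :
    HasExpansion (f + g) fun n => c n + e n := fun n m => by
  rw [coeff_add, map_add, coeff_add, hf, hg]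

lemma mul (hf : HasExpansion f c) (hg : HasExpansion g e) :
    HasExpansion (f * g) fun n => ∑ ij ∈ antidiagonal n, c ij.1 * e ij.2 := fun n m => by
  classical
  simp only [coeff_sum, coeff_mul, map_sum, PowerSeries.coeff_mul, hf _ _, hg _ _]
  exact Finset.sum_comm

lemma zero_eq_map (hf : HasExpansion f c) : c 0 = f.map PowerSeries.constantCoeff :=
  MvPolynomial.ext _ _ fun m => by
    rw [coeff_map, ← hf, PowerSeries.coeff_zero_eq_constantCoeff_apply]

end HasExpansion

lemma exists_hasExpansion {f : MvPolynomial σ (PowerSeries R)} {k : ℕ} (hf : f.IsHomogeneous k) :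
    ∃ c, HasExpansion f c ∧ ∀ n, (c n).IsHomogeneous k := by
  classical
  refine ⟨fun n => ∑ m ∈ f.support, monomial m (PowerSeries.coeff n (coeff m f)), fun n m => ?_,
    fun n => IsHomogeneous.sum _ _ _ fun m hm => isHomogeneous_monomial _ ?_⟩
  · simp only [coeff_sum, coeff_monomial, Finset.sum_ite_eq', mem_support_iff, ite_not]
    split_ifs with h
    · rw [h, map_zero]
    · rfl
  · exact (hf.degree_eq_sum_deg_support hm).symm

lemma exists_hasExpansion_of_isHomogeneous [Finite σ] {c : ℕ → MvPolynomial σ R} {k : ℕ}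
    (hc : ∀ n, (c n).IsHomogeneous k) : ∃ f, HasExpansion f c ∧ f.IsHomogeneous k := by
  classical
  have := Fintype.ofFinite σ
  have hfin : {m : σ →₀ ℕ | m.degree = k}.Finite := Finsupp.finite_of_degree_eq k
  refine ⟨∑ m ∈ hfin.toFinset, monomial m (PowerSeries.mk fun n => coeff m (c n)), fun n m => ?_,
    IsHomogeneous.sum _ _ _ fun m hm => isHomogeneous_monomial _ (by simpa using hm)⟩
  simp only [coeff_sum, coeff_monomial, Finset.sum_ite_eq', Set.Finite.mem_toFinset,
    Set.mem_ofPred_eq]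
  split_ifs with h
  · rw [PowerSeries.coeff_mk]
  · rw [map_zero, (hc n).coeff_eq_zero h]

end PowerSeriesCoefficients

section FormLifting

variable {σ R : Type*} [CommSemiring R]

lemma homogeneousComponent_mul_of_isHomogeneous {p q : MvPolynomial σ R} {n : ℕ}
    (hq : q.IsHomogeneous n) (m : ℕ) :
    homogeneousComponent (m + n) (p * q) = homogeneousComponent m p * q := by
  let := MvPolynomial.gradedAlgebra (σ := σ) (R := R)
  rw [← decomposition.decompose'_apply, ← decomposition.decompose'_apply]
  exact DirectSum.coe_decompose_mul_add_of_right_mem (homogeneousSubmodule σ R) hq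

/-- The bilinear map `((U, P), (V, Q)) ↦ U * V + P * Q` on pairs of forms of degrees `a`, `b`. -/
noncomputable def pairedProduct (σ R : Type*) [CommSemiring R] (a b : ℕ) :
    (homogeneousSubmodule σ R a × homogeneousSubmodule σ R a) →ₗ[R]
      (homogeneousSubmodule σ R b × homogeneousSubmodule σ R b) →ₗ[R]
        homogeneousSubmodule σ R (a + b) :=
  LinearMap.mk₂ R
    (fun x y => ⟨x.1 * y.1 + x.2 * y.2, (x.1.2.mul y.1.2).add (x.2.2.mul y.2.2)⟩)
    (fun _ _ _ => Subtype.ext (by simp; ring)) (fun _ _ _ => Subtype.ext (by simp))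
    (fun _ _ _ => Subtype.ext (by simp; ring)) (fun _ _ _ => Subtype.ext (by simp))

lemma exists_pairedProduct_add_eq {a b : ℕ}
    {x : homogeneousSubmodule σ R a × homogeneousSubmodule σ R a}
    {y : homogeneousSubmodule σ R b × homogeneousSubmodule σ R b}
    {s : homogeneousSubmodule σ R (a + b)}
    (hs : s.1 ∈ Ideal.span {x.1.1, x.2.1, y.1.1, y.2.1}) :
    ∃ x' y', pairedProduct σ R a b x y' + pairedProduct σ R a b x' y = s := by
  simp only [Ideal.mem_span_insert, Ideal.mem_span_singleton'] at hs
  obtain ⟨c₁, _, ⟨c₂, _, ⟨c₃, _, ⟨c₄, rfl⟩, rfl⟩, rfl⟩, hc⟩ := hs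
  refine ⟨(⟨_, homogeneousComponent_mem a c₃⟩, ⟨_, homogeneousComponent_mem a c₄⟩),
    (⟨_, homogeneousComponent_mem b c₁⟩, ⟨_, homogeneousComponent_mem b c₂⟩), Subtype.ext ?_⟩
  have hcomp := homogeneousComponent_eq_self s.2
  rw [hc, map_add, map_add, map_add, homogeneousComponent_mul_of_isHomogeneous y.1.2,
    homogeneousComponent_mul_of_isHomogeneous y.2.2, add_comm a b,
    homogeneousComponent_mul_of_isHomogeneous x.1.2,
    homogeneousComponent_mul_of_isHomogeneous x.2.2, ← hc] at hcomp
  rw [← hcomp]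
  simp only [pairedProduct, LinearMap.mk₂_apply, Submodule.coe_add]
  ring

end FormLifting

lemma IsSumOfTwoProducts.of_map_constantCoeff {σ R : Type*} [Finite σ] [CommRing R] {a b : ℕ}
    {f : MvPolynomial σ (PowerSeries R)} (hf : f.IsHomogeneous (a + b))
    {U P V Q : MvPolynomial σ R} (hU : U.IsHomogeneous a) (hP : P.IsHomogeneous a)
    (hV : V.IsHomogeneous b) (hQ : Q.IsHomogeneous b)
    (hmap : f.map PowerSeries.constantCoeff = U * V + P * Q)
    (hspan : ∀ s : MvPolynomial σ R, s.IsHomogeneous (a + b) → s ∈ Ideal.span {U, P, V, Q}) :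
    IsSumOfTwoProducts a b f := by
  obtain ⟨c, hfc, hc⟩ := exists_hasExpansion hf
  obtain ⟨x, y, hxy⟩ := exists_sum_antidiagonal_eq_of_surjective (pairedProduct σ R a b)
    (x₀ := (⟨U, hU⟩, ⟨P, hP⟩)) (y₀ := (⟨V, hV⟩, ⟨Q, hQ⟩)) (c := fun n => ⟨c n, hc n⟩)
    (fun s => exists_pairedProduct_add_eq (hspan s s.2))
    (Subtype.ext (hfc.zero_eq_map.trans hmap))
  obtain ⟨F₁, hF₁x, hF₁⟩ := exists_hasExpansion_of_isHomogeneous fun n => (x n).1.2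
  obtain ⟨F₂, hF₂x, hF₂⟩ := exists_hasExpansion_of_isHomogeneous fun n => (x n).2.2
  obtain ⟨G₁, hG₁y, hG₁⟩ := exists_hasExpansion_of_isHomogeneous fun n => (y n).1.2
  obtain ⟨G₂, hG₂y, hG₂⟩ := exists_hasExpansion_of_isHomogeneous fun n => (y n).2.2
  refine ⟨F₁, F₂, G₁, G₂, hF₁, hF₂, hG₁, hG₂, hfc.eq ?_⟩
  convert (hF₁x.mul hG₁y).add (hF₂x.mul hG₂y) using 2 with n
  rw [← Finset.sum_add_distrib]
  exact (congrArg Subtype.val (hxy n)).symm.trans (AddSubmonoidClass.coe_finsetSum _ _)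

section Degeneration

lemma map_bind₁_toMvPolynomial {σ R S : Type*} [CommSemiring R] [CommSemiring S] [Fintype σ]
    (φ : R →+* S) (M : Matrix σ σ R) (F : MvPolynomial σ R) :
    (bind₁ M.toMvPolynomial F).map φ = bind₁ (M.map φ).toMvPolynomial (F.map φ) := by
  rw [map_bind₁, funext (Matrix.toMvPolynomial_map φ M)]

/-- A decomposition of a degenerate linear transform of `F` lifts to the nearby linear transforms of
`F`, which are equivalent to `F` as soon as they are nondegenerate. -/
lemma IsSumOfTwoProducts.of_degeneration {σ K : Type*} [Fintype σ] [DecidableEq σ] [Field K]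
    [IsAlgClosed K] {a b : ℕ} {F U P V Q : MvPolynomial σ K} (hF : F.IsHomogeneous (a + b))
    (hU : U.IsHomogeneous a) (hP : P.IsHomogeneous a) (hV : V.IsHomogeneous b)
    (hQ : Q.IsHomogeneous b) {M : Matrix σ σ (PowerSeries K)} (hM : M.det ≠ 0)
    (hdegenerate :
      bind₁ (M.map PowerSeries.constantCoeff).toMvPolynomial F = U * V + P * Q)
    (hspan : ∀ s : MvPolynomial σ K, s.IsHomogeneous (a + b) → s ∈ Ideal.span {U, P, V, Q}) :
    IsSumOfTwoProducts a b F := by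
  set ι : PowerSeries K →+* LaurentSeries K := algebraMap _ _
  have hhom : (bind₁ M.toMvPolynomial (F.map PowerSeries.C)).IsHomogeneous (a + b) :=
    isHomogeneous_bind₁ (hF.map PowerSeries.C) M.toMvPolynomial_isHomogeneous
  have hlift : IsSumOfTwoProducts a b (bind₁ M.toMvPolynomial (F.map PowerSeries.C)) := by
    refine .of_map_constantCoeff hhom hU hP hV hQ ?_ hspan
    rw [map_bind₁_toMvPolynomial, MvPolynomial.map_map, PowerSeries.constantCoeff_comp_C,
      MvPolynomial.map_id, hdegenerate]
  refine .of_map_algebraMap (LaurentSeries K) (.of_bind₁_toMvPolynomial (M := M.map ι) ?_ ?_)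
  · rw [Matrix.isUnit_iff_isUnit_det, ← RingHom.mapMatrix_apply, ← RingHom.map_det,
      isUnit_iff_ne_zero]
    exact (map_ne_zero_iff ι (IsFractionRing.injective _ _)).2 hM
  · have hmap := hlift.map ι
    rwa [map_bind₁_toMvPolynomial, MvPolynomial.map_map] at hmap

end Degeneration

open Polynomial in
lemma exists_mul_add_mul_eq_of_natDegree_le {R : Type*} [CommRing R] {j k : ℕ} (hjk : k ≤ j + 1)
    {U V W : R[X]} (hU : IsMonicOfDegree U k) (hV : V.natDegree ≤ k) (hUV : IsCoprime U V)
    (hW : W.natDegree ≤ j + k) :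
    ∃ A B : R[X], A.natDegree ≤ j ∧ B.natDegree ≤ j ∧ A * U + B * V = W := by
  nontriviality R
  obtain ⟨A₀, B₀, hAB⟩ := hUV
  set B := W * B₀ %ₘ U
  set A := W * A₀ + W * B₀ /ₘ U * V
  have hsum : A * U + B * V = W := by
    linear_combination V * modByMonic_add_div (W * B₀) U + W * hAB
  have hBk : B = 0 ∨ B.natDegree < k := or_iff_not_imp_left.2 fun h0 =>
    hU.natDegree_eq ▸ natDegree_lt_natDegree h0 (degree_modByMonic_lt _ hU.monic)
  have hBj : B.natDegree ≤ j := by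
    rcases hBk with h | h
    · simp [h]
    · omega
  refine ⟨A, B, ?_, hBj, hsum⟩
  rcases eq_or_ne A 0 with h0 | h0
  · simp [h0]
  have hAU : (A * U).natDegree ≤ j + k := by
    rw [eq_sub_of_add_eq hsum]
    exact (natDegree_sub_le _ _).trans (max_le hW (natDegree_mul_le_of_le hBj hV))
  rwa [mul_comm, hU.monic.natDegree_mul' h0, add_comm, hU.natDegree_eq, add_le_add_iff_right] at hAU

section Line

open Polynomial (IsMonicOfDegree)

variable {K : Type*} [Field K]

/-- The linear form `x - r y`, which cuts out a line through the point `(0 : 0 : 1)`. -/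
noncomputable def lineForm (r : K) : MvPolynomial (Fin 3) K := X 0 - C r * X 1

open Polynomial in
/-- Restriction to the line `x = r y`, in the affine chart `y = 1` with coordinate `z`. -/
noncomputable def lineEval (r : K) : MvPolynomial (Fin 3) K →ₐ[K] K[X] :=
  aeval ![Polynomial.C r, 1, Polynomial.X]

lemma isHomogeneous_lineForm (r : K) : (lineForm r).IsHomogeneous 1 :=
  (isHomogeneous_X _ _).sub (isHomogeneous_C_mul_X _ _)

lemma lineEval_lineForm (r s : K) : lineEval r (lineForm s) = Polynomial.C (r - s) := by
  simp [lineEval, lineForm]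

lemma lineForm_ne_zero (r : K) : lineForm r ≠ 0 := fun h => by
  simpa [h] using lineEval_lineForm (r + 1) r

lemma natDegree_lineEval_le (r : K) {n : ℕ} {s : MvPolynomial (Fin 3) K}
    (hs : s.IsHomogeneous n) : (lineEval r s).natDegree ≤ n := by
  refine (aeval_natDegree_le s hs.totalDegree_le _ fun i => ?_).trans_eq (mul_one n)
  fin_cases i <;> simp

lemma exists_isHomogeneous_lineEval_eq (r : K) {n : ℕ} {p : Polynomial K} (hp : p.natDegree ≤ n) :
    ∃ s, s.IsHomogeneous n ∧ lineEval r s = p := by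
  refine ⟨rename ![2, 1] (p.homogenize n), p.isHomogeneous_homogenize.rename_isHomogeneous, ?_⟩
  rw [lineEval, aeval_rename, Polynomial.aeval_homogenize_of_eq_one hp _ rfl]
  exact Polynomial.aeval_X_left_apply p

lemma lineForm_dvd_of_lineEval_eq_zero {r : K} {n : ℕ} {s : MvPolynomial (Fin 3) K}
    (hs : s.IsHomogeneous n) (h0 : lineEval r s = 0) : lineForm r ∣ s := by
  let restrict : MvPolynomial (Fin 3) K →ₐ[K] MvPolynomial (Fin 2) K :=
    aeval ![C r * X 1, X 1, X 0]
  have hrestrict : restrict s = 0 := by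
    have hlin (i : Fin 3) :
        (![C r * X 1, X 1, X 0] i : MvPolynomial (Fin 2) K).IsHomogeneous 1 := by
      fin_cases i
      exacts [isHomogeneous_C_mul_X _ _, isHomogeneous_X _ _, isHomogeneous_X _ _]
    have hhom : (restrict s).IsHomogeneous n := by simpa only [one_mul] using hs.aeval _ hlin
    have hdehom : aeval ![Polynomial.X, 1] (restrict s) = lineEval r s := by
      rw [← AlgHom.comp_apply]
      congr 1
      ext i
      fin_cases i <;> simp [restrict, lineEval]
    rw [← Polynomial.homogenize_eq_of_isHomogeneous hhom (hdehom.trans h0),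
      Polynomial.homogenize_zero]
  let π := Ideal.Quotient.mkₐ K (Ideal.span {lineForm r})
  have hX : π (X 0) = π (C r * X 1) := Ideal.Quotient.eq.2 (Ideal.mem_span_singleton_self _)
  have hπ : (π.comp (rename ![2, 1])).comp restrict = π := by
    ext i
    fin_cases i <;> simp [restrict, hX]
  rw [← Ideal.mem_span_singleton, ← Ideal.Quotient.eq_zero_iff_mem]
  change π s = 0
  rw [← hπ, AlgHom.comp_apply, hrestrict, map_zero]

/-- Forms `u`, `v` of degree `k` without common zeros on a line generate, modulo the equation of the
line, all forms of degree at least `2 * k - 1`. -/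
lemma mem_of_forall_lineForm_mul_mem {r : K} {j k : ℕ} (hjk : k ≤ j + 1)
    {J : Ideal (MvPolynomial (Fin 3) K)} {u v : MvPolynomial (Fin 3) K} (huJ : u ∈ J) (hvJ : v ∈ J)
    (hu : u.IsHomogeneous k) (hv : v.IsHomogeneous k) (hmonic : IsMonicOfDegree (lineEval r u) k)
    (hcop : IsCoprime (lineEval r u) (lineEval r v)) {n : ℕ} (hn : j + k = 1 + n)
    (hJ : ∀ γ : MvPolynomial (Fin 3) K, γ.IsHomogeneous n → lineForm r * γ ∈ J)
    {s : MvPolynomial (Fin 3) K} (hs : s.IsHomogeneous (1 + n)) : s ∈ J := by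
  rw [← hn] at hs
  obtain ⟨A, B, hA, hB, hAB⟩ := exists_mul_add_mul_eq_of_natDegree_le hjk hmonic
    (natDegree_lineEval_le r hv) hcop (natDegree_lineEval_le r hs)
  obtain ⟨α, hα, rfl⟩ := exists_isHomogeneous_lineEval_eq r hA
  obtain ⟨β, hβ, rfl⟩ := exists_isHomogeneous_lineEval_eq r hB
  have hhom : (s - (α * u + β * v)).IsHomogeneous (j + k) := hs.sub ((hα.mul hu).add (hβ.mul hv))
  obtain ⟨γ, hγ⟩ := lineForm_dvd_of_lineEval_eq_zero hhom (r := r) (by simp [hAB])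
  rw [hγ, hn] at hhom
  rw [← sub_add_cancel s (α * u + β * v), hγ]
  exact J.add_mem (hJ γ (isHomogeneous_right_of_mul (lineForm_ne_zero r) (isHomogeneous_lineForm r)
    hhom)) (J.add_mem (J.mul_mem_left α huJ) (J.mul_mem_left β hvJ))

end Line

section ConcurrentLines

open Polynomial (IsMonicOfDegree)

variable {K : Type*} [Field K]

lemma mul_mem_of_mem_span {A : Type*} [CommRing A] {J : Ideal A} {S : Set A} {l x : A}
    (hS : ∀ g ∈ S, l * g ∈ J) (hx : x ∈ Ideal.span S) : l * x ∈ J :=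
  Submodule.span_le (p := Submodule.comap (LinearMap.mulLeft A l) J).2 hS hx

lemma isHomogeneous_prod_lineForm (S : Finset K) : (∏ t ∈ S, lineForm t).IsHomogeneous S.card := by
  simpa using IsHomogeneous.prod S lineForm (fun _ => 1) fun t _ => isHomogeneous_lineForm t

lemma isCoprime_lineEval {r : K} {S : Finset K} (hr : r ∉ S) {A B u v : MvPolynomial (Fin 3) K}
    (h : A * u + B * v = ∏ t ∈ S, lineForm t) : IsCoprime (lineEval r u) (lineEval r v) := by
  have hunit : IsUnit (lineEval r (∏ t ∈ S, lineForm t)) := by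
    rw [map_prod, IsUnit.prod_iff]
    intro t ht
    rw [lineEval_lineForm, Polynomial.isUnit_C, isUnit_iff_ne_zero, sub_ne_zero]
    exact (ne_of_mem_of_not_mem ht hr).symm
  obtain ⟨w, hw⟩ := hunit.exists_left_inv
  refine ⟨w * lineEval r A, w * lineEval r B, ?_⟩
  rw [← hw, ← h, map_add, map_mul, map_mul]
  ring

lemma isMonicOfDegree_lineEval_succ {k : ℕ} {r m : K} {u p : MvPolynomial (Fin 3) K}
    (hu : IsMonicOfDegree (lineEval r u) k) (hp : p.IsHomogeneous k) :
    IsMonicOfDegree (lineEval r (X 2 * u + lineForm m * p)) (k + 1) := by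
  have hX : lineEval r (X 2) = Polynomial.X := by simp [lineEval]
  rw [map_add, map_mul, map_mul, hX, lineEval_lineForm, add_comm k]
  refine ((Polynomial.isMonicOfDegree_X K).mul hu).add_right ?_
  have := (Polynomial.natDegree_C_mul_le (r - m) (lineEval r p)).trans
    (natDegree_lineEval_le r hp)
  omega

lemma mul_mem_span_of_mem_span {A : Type*} [CommRing A] {l m z u₁ u₂ p₁ p₂ x : A}
    (hx : x ∈ Ideal.span {u₁, u₂, p₁, p₂}) :
    l * m * x ∈ Ideal.span {z * u₁ + m * p₁, z * u₂ + m * p₂, -(l * u₁), -(l * u₂)} := by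
  set J := Ideal.span {z * u₁ + m * p₁, z * u₂ + m * p₂, -(l * u₁), -(l * u₂)}
  have hv₁ : z * u₁ + m * p₁ ∈ J := Ideal.subset_span (by simp)
  have hv₂ : z * u₂ + m * p₂ ∈ J := Ideal.subset_span (by simp)
  have hu₁ : l * u₁ ∈ J := J.neg_mem_iff.1 (Ideal.subset_span (by simp))
  have hu₂ : l * u₂ ∈ J := J.neg_mem_iff.1 (Ideal.subset_span (by simp))
  refine mul_mem_of_mem_span ?_ hx
  rintro g (rfl | rfl | rfl | rfl)
  · convert J.mul_mem_left m hu₁ using 1; ring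
  · convert J.mul_mem_left m hu₂ using 1; ring
  · convert J.sub_mem (J.mul_mem_left l hv₁) (J.mul_mem_left z hu₁) using 1; ring
  · convert J.sub_mem (J.mul_mem_left l hv₂) (J.mul_mem_left z hu₂) using 1; ring

lemma mem_span_succ [DecidableEq K] {k : ℕ} {l m : K} {S : Finset K} (hl : l ∉ insert m S)
    (hm : m ∉ S) {u₁ u₂ p₁ p₂ : MvPolynomial (Fin 3) K} (hu₁ : u₁.IsHomogeneous k)
    (hu₂ : u₂.IsHomogeneous k) (hp₁ : p₁.IsHomogeneous k) (hp₂ : p₂.IsHomogeneous k)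
    (hdet : u₁ * p₂ - p₁ * u₂ = ∏ t ∈ S, lineForm t)
    (hmonic : ∀ r, IsMonicOfDegree (lineEval r u₁) k)
    (hspan : ∀ s : MvPolynomial (Fin 3) K, s.IsHomogeneous (2 * k) →
      s ∈ Ideal.span {u₁, u₂, p₁, p₂})
    {s : MvPolynomial (Fin 3) K} (hs : s.IsHomogeneous (2 * (k + 1))) :
    s ∈ Ideal.span {X 2 * u₁ + lineForm m * p₁, X 2 * u₂ + lineForm m * p₂,
      -(lineForm l * u₁), -(lineForm l * u₂)} := by
  set J := Ideal.span {X 2 * u₁ + lineForm m * p₁, X 2 * u₂ + lineForm m * p₂,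
    -(lineForm l * u₁), -(lineForm l * u₂)}
  have hhom {u p : MvPolynomial (Fin 3) K} (hu : u.IsHomogeneous k) (hp : p.IsHomogeneous k) :
      (X 2 * u + lineForm m * p).IsHomogeneous (k + 1) :=
    add_comm 1 k ▸ ((isHomogeneous_X _ _).mul hu).add ((isHomogeneous_lineForm m).mul hp)
  have hcop_l := isCoprime_lineEval hl (A := -u₂) (B := u₁) (u := X 2 * u₁ + lineForm m * p₁)
    (v := X 2 * u₂ + lineForm m * p₂) (by rw [Finset.prod_insert hm, ← hdet]; ring)
  have hcop_m := isCoprime_lineEval hm (A := p₂) (B := -p₁) (u := u₁) (v := u₂)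
    (by rw [← hdet]; ring)
  rw [show 2 * (k + 1) = 1 + (1 + 2 * k) by ring] at hs
  refine mem_of_forall_lineForm_mul_mem (j := k + 1) (by omega) (Ideal.subset_span (by simp))
    (Ideal.subset_span (by simp)) (hhom hu₁ hp₁) (hhom hu₂ hp₂)
    (isMonicOfDegree_lineEval_succ (hmonic l) hp₁) hcop_l (by omega) (fun γ hγ => ?_) hs
  refine mem_of_forall_lineForm_mul_mem (j := k + 1)
    (J := Submodule.comap (LinearMap.mulLeft _ (lineForm l)) J) (by omega)
    (J.neg_mem_iff.1 (Ideal.subset_span (by simp))) (J.neg_mem_iff.1 (Ideal.subset_span (by simp)))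
    hu₁ hu₂ (hmonic m) hcop_m (by omega) (fun δ hδ => ?_) hγ
  rw [Submodule.mem_comap, LinearMap.mulLeft_apply, ← mul_assoc]
  exact mul_mem_span_of_mem_span (hspan δ hδ)

/-- The matrix `!![u₁, u₂; p₁, p₂]` is a product of `k` matrices `!![z, m; -l, 0]`, whose
determinants `l * m` are products of two lines. -/
lemma exists_det_eq_prod_lineForm (k : ℕ) (S : Finset K) (hS : S.card = 2 * k) :
    ∃ u₁ u₂ p₁ p₂ : MvPolynomial (Fin 3) K,
      u₁.IsHomogeneous k ∧ u₂.IsHomogeneous k ∧ p₁.IsHomogeneous k ∧ p₂.IsHomogeneous k ∧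
      u₁ * p₂ - p₁ * u₂ = ∏ t ∈ S, lineForm t ∧
      (∀ r, IsMonicOfDegree (lineEval r u₁) k) ∧
      ∀ s : MvPolynomial (Fin 3) K, s.IsHomogeneous (2 * k) →
        s ∈ Ideal.span {u₁, u₂, p₁, p₂} := by
  classical
  induction k generalizing S with
  | zero =>
    obtain rfl : S = ∅ := by simpa using hS
    refine ⟨1, 0, 0, 1, isHomogeneous_one _ _, isHomogeneous_zero _ _ _, isHomogeneous_zero _ _ _,
      isHomogeneous_one _ _, by simp, by simp, fun s _ => ?_⟩
    rw [Ideal.eq_top_of_isUnit_mem _ (Ideal.subset_span (Set.mem_insert 1 _)) isUnit_one]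
    exact Submodule.mem_top
  | succ k ih =>
    obtain ⟨l, S₁, hl, rfl, hS₁⟩ := Finset.card_eq_succ.1 (show S.card = (2 * k + 1) + 1 by omega)
    obtain ⟨m, S₀, hm, rfl, hS₀⟩ := Finset.card_eq_succ.1 hS₁
    obtain ⟨u₁, u₂, p₁, p₂, hu₁, hu₂, hp₁, hp₂, hdet, hmonic, hspan⟩ := ih S₀ hS₀
    have hlin {f u : MvPolynomial (Fin 3) K} (hf : f.IsHomogeneous 1) (hu : u.IsHomogeneous k) :
        (f * u).IsHomogeneous (k + 1) := add_comm 1 k ▸ hf.mul hu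
    have hz : (X 2 : MvPolynomial (Fin 3) K).IsHomogeneous 1 := isHomogeneous_X _ _
    have hl₁ := isHomogeneous_lineForm l
    have hm₁ := isHomogeneous_lineForm m
    refine ⟨X 2 * u₁ + lineForm m * p₁, X 2 * u₂ + lineForm m * p₂, -(lineForm l * u₁),
      -(lineForm l * u₂), (hlin hz hu₁).add (hlin hm₁ hp₁), (hlin hz hu₂).add (hlin hm₁ hp₂),
      (hlin hl₁ hu₁).neg, (hlin hl₁ hu₂).neg, ?_,
      fun r => isMonicOfDegree_lineEval_succ (hmonic r) hp₁,
      fun s hs => mem_span_succ hl hm hu₁ hu₂ hp₁ hp₂ hdet hmonic hspan hs⟩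
    rw [Finset.prod_insert hl, Finset.prod_insert hm, ← hdet]
    ring

lemma mem_span_mul_prod_lineForm {k : ℕ} {S T : Finset K} (hST : Disjoint S T)
    {u₁ u₂ p₁ p₂ : MvPolynomial (Fin 3) K} (hu₁ : u₁.IsHomogeneous k) (hp₁ : p₁.IsHomogeneous k)
    (hdet : u₁ * p₂ - p₁ * u₂ = ∏ t ∈ S, lineForm t)
    (hmonic : ∀ r, IsMonicOfDegree (lineEval r u₁) k)
    (hspan : ∀ s : MvPolynomial (Fin 3) K, s.IsHomogeneous (2 * k) →
      s ∈ Ideal.span {u₁, u₂, p₁, p₂})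
    {s : MvPolynomial (Fin 3) K} (hs : s.IsHomogeneous (2 * k + T.card)) :
    s ∈ Ideal.span {u₁, p₁, p₂ * ∏ t ∈ T, lineForm t, -u₂ * ∏ t ∈ T, lineForm t} := by
  classical
  induction T using Finset.induction_on generalizing s with
  | empty =>
    refine Ideal.span_le.2 ?_ (hspan s hs)
    rintro g (rfl | rfl | rfl | rfl)
    on_goal 2 => apply (Ideal.neg_mem_iff _).1
    all_goals exact Ideal.subset_span (by simp)
  | insert l T hl ih =>
    rw [Finset.disjoint_insert_right] at hST
    rw [Finset.card_insert_of_notMem hl, ← add_assoc, add_comm _ 1] at hs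
    set J := Ideal.span {u₁, p₁, p₂ * ∏ t ∈ insert l T, lineForm t,
      -u₂ * ∏ t ∈ insert l T, lineForm t}
    have hu₁J : u₁ ∈ J := Ideal.subset_span (by simp)
    have hp₁J : p₁ ∈ J := Ideal.subset_span (by simp)
    have hcop := isCoprime_lineEval hST.1 (A := p₂) (B := -u₂) (u := u₁) (v := p₁)
      (by rw [← hdet]; ring)
    refine mem_of_forall_lineForm_mul_mem (j := k + T.card + 1) (by omega) hu₁J hp₁J hu₁ hp₁
      (hmonic l) hcop (by omega) (fun γ hγ => mul_mem_of_mem_span ?_ (ih hST.2 hγ)) hs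
    rintro g (rfl | rfl | rfl | rfl)
    · exact J.mul_mem_left _ hu₁J
    · exact J.mul_mem_left _ hp₁J
    all_goals
      rw [mul_left_comm, ← Finset.prod_insert hl]
      exact Ideal.subset_span (by simp)

lemma exists_generating_decomposition_prod_lineForm {a b : ℕ} (hab : a ≤ b) {S : Finset K}
    (hS : S.card = a + b) :
    ∃ U P V Q : MvPolynomial (Fin 3) K, U.IsHomogeneous a ∧ P.IsHomogeneous a ∧
      V.IsHomogeneous b ∧ Q.IsHomogeneous b ∧ ∏ t ∈ S, lineForm t = U * V + P * Q ∧
      ∀ s : MvPolynomial (Fin 3) K, s.IsHomogeneous (a + b) → s ∈ Ideal.span {U, P, V, Q} := by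
  classical
  obtain ⟨S₁, hS₁, hcard⟩ := Finset.exists_subset_card_eq (show 2 * a ≤ S.card by omega)
  have hcard_sdiff : a + (S \ S₁).card = b := by rw [Finset.card_sdiff_of_subset hS₁]; omega
  obtain ⟨u₁, u₂, p₁, p₂, hu₁, hu₂, hp₁, hp₂, hdet, hmonic, hspan⟩ :=
    exists_det_eq_prod_lineForm a S₁ hcard
  have hT := isHomogeneous_prod_lineForm (S \ S₁)
  refine ⟨u₁, p₁, p₂ * ∏ t ∈ S \ S₁, lineForm t, -u₂ * ∏ t ∈ S \ S₁, lineForm t, hu₁, hp₁,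
    hcard_sdiff ▸ hp₂.mul hT, hcard_sdiff ▸ hu₂.neg.mul hT, ?_, fun s hs =>
    mem_span_mul_prod_lineForm Finset.disjoint_sdiff hu₁ hp₁ hdet hmonic hspan ?_⟩
  · rw [← Finset.prod_sdiff hS₁, ← hdet]
    ring
  · rwa [two_mul, add_assoc, hcard_sdiff]

end ConcurrentLines

section RestrictionToLine

variable {K : Type*} [Field K]

lemma toMvPolynomial_eq_sum {m n R : Type*} [CommSemiring R] [Fintype n] (M : Matrix m n R)
    (i : m) : M.toMvPolynomial i = ∑ j, C (M i j) * X j := by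
  simp only [Matrix.toMvPolynomial, C_mul_X_eq_monomial]

lemma exists_eq_leadingCoeff_mul_prod_X_sub_C [IsAlgClosed K] {n : ℕ} {f : Polynomial K}
    (hf : f.Separable) (hn : f.natDegree = n) :
    ∃ S : Finset K, S.card = n ∧ f = .C f.leadingCoeff * ∏ t ∈ S, (.X - .C t) := by
  classical
  have hnodup := Polynomial.nodup_roots hf
  refine ⟨f.roots.toFinset, ?_, ?_⟩
  · rw [Multiset.toFinset_card_of_nodup hnodup, IsAlgClosed.card_roots_eq_natDegree, hn]
  · rw [Finset.prod, Multiset.toFinset_val, hnodup.dedup]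
    exact (IsAlgClosed.splits f).eq_prod_roots

lemma homogenize_prod_X_sub_C (S : Finset K) :
    (∏ t ∈ S, (Polynomial.X - Polynomial.C t)).homogenize S.card =
      ∏ t ∈ S, (X 0 - C t * X 1) := by
  have h := Polynomial.homogenize_finsetProd (s := S) (p := fun t => Polynomial.X - Polynomial.C t)
    (n := fun _ => 1) fun t _ => Polynomial.natDegree_X_sub_C_le t
  simpa using h

lemma bind₁_eq_C_mul_prod_lineForm {n : ℕ} {F : MvPolynomial (Fin 3) K} (hF : F.IsHomogeneous n)
    {c : K} {S : Finset K} (hS : S.card = n)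
    (h : aeval ![Polynomial.X, 1, 0] F =
      Polynomial.C c * ∏ t ∈ S, (Polynomial.X - Polynomial.C t)) :
    bind₁ (Matrix.diagonal ![1, 1, 0]).toMvPolynomial F = C c * ∏ t ∈ S, lineForm t := by
  let restrict : MvPolynomial (Fin 3) K →ₐ[K] MvPolynomial (Fin 2) K := aeval ![X 0, X 1, 0]
  have hhom : (restrict F).IsHomogeneous n := by
    rw [← one_mul n]
    refine hF.aeval _ fun i => ?_
    fin_cases i
    exacts [isHomogeneous_X _ _, isHomogeneous_X _ _, isHomogeneous_zero _ _ _]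
  have hdehom : (aeval ![Polynomial.X, 1] (restrict F) : Polynomial K) =
      aeval ![Polynomial.X, 1, 0] F := by
    rw [← AlgHom.comp_apply]
    congr 1
    ext i
    fin_cases i <;> simp [restrict]
  have hrename : (rename ![0, 1]).comp restrict =
      bind₁ (Matrix.diagonal ![1, 1, 0]).toMvPolynomial := by
    refine algHom_ext fun i => ?_
    rw [bind₁_X_right, toMvPolynomial_eq_sum, Fin.sum_univ_three]
    fin_cases i <;> simp [restrict]
  rw [← hrename, AlgHom.comp_apply,
    ← Polynomial.homogenize_eq_of_isHomogeneous hhom (hdehom.trans h),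
    Polynomial.homogenize_C_mul, ← hS, homogenize_prod_X_sub_C]
  simp [lineForm]

lemma IsSumOfTwoProducts.of_restriction [IsAlgClosed K] {a b : ℕ} (hab : a ≤ b)
    {F : MvPolynomial (Fin 3) K} (hF : F.IsHomogeneous (a + b))
    (hsep : (aeval ![Polynomial.X, 1, 0] F : Polynomial K).Separable)
    (hdeg : (aeval ![Polynomial.X, 1, 0] F : Polynomial K).natDegree = a + b) :
    IsSumOfTwoProducts a b F := by
  obtain ⟨S, hS, hprod⟩ := exists_eq_leadingCoeff_mul_prod_X_sub_C hsep hdeg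
  have hres := bind₁_eq_C_mul_prod_lineForm hF hS hprod
  set c := (aeval ![Polynomial.X, 1, 0] F : Polynomial K).leadingCoeff
  have hc : c ≠ 0 := Polynomial.leadingCoeff_ne_zero.2 hsep.ne_zero
  have hcC : (C c : MvPolynomial (Fin 3) K) * C c⁻¹ = 1 := by
    rw [← C_mul, mul_inv_cancel₀ hc, C_1]
  obtain ⟨U, P, V, Q, hU, hP, hV, hQ, hsum, hspan⟩ :=
    exists_generating_decomposition_prod_lineForm hab hS
  have hnormalized : IsSumOfTwoProducts a b (C c⁻¹ * F) := by
    refine .of_degeneration (M := Matrix.diagonal ![1, 1, PowerSeries.X]) (hF.C_mul _) hU hP hV hQ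
      ?_ ?_ hspan
    · simp [Fin.prod_univ_three, PowerSeries.X_ne_zero]
    · have hM : (Matrix.diagonal ![1, 1, PowerSeries.X]).map PowerSeries.constantCoeff =
          Matrix.diagonal ![(1 : K), 1, 0] := by
        rw [Matrix.diagonal_map (map_zero _)]
        congr 1
        ext i
        fin_cases i <;> simp
      rw [hM, map_mul, hres, ← hsum, bind₁_C_right, ← mul_assoc, mul_comm (C c⁻¹), hcC, one_mul]
  rw [← one_mul F, ← hcC, mul_assoc, ← zero_add a]
  exact hnormalized.mul_left (isHomogeneous_C _ c)

end RestrictionToLine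

section GenericLine

variable {K : Type*} [Field K]

lemma exists_isUnit_eval_col_ne_zero [Infinite K] {σ : Type*} [Fintype σ] [DecidableEq σ]
    {F : MvPolynomial σ K} (hF : F ≠ 0) (i : σ) :
    ∃ M : Matrix σ σ K, IsUnit M ∧ eval (M.col i) F ≠ 0 := by
  have hcol : rename (fun j => (j, i)) F ≠ 0 :=
    (map_ne_zero_iff _ (rename_injective _ (Prod.mk_left_injective i))).2 hF
  have hprod := mul_ne_zero hcol (Matrix.det_mvPolynomialX_ne_zero σ K)
  obtain ⟨v, hv⟩ : ∃ v, eval v (rename (fun j => (j, i)) F *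
      (Matrix.mvPolynomialX σ σ K).det) ≠ 0 := by
    by_contra! h
    exact hprod (MvPolynomial.funext fun v => by rw [h v, map_zero])
  rw [map_mul, eval_rename] at hv
  refine ⟨Matrix.of fun j k => v (j, k), ?_, left_ne_zero_of_mul hv⟩
  rw [Matrix.isUnit_iff_isUnit_det, isUnit_iff_ne_zero]
  convert right_ne_zero_of_mul hv
  rw [RingHom.map_det]
  congr 1
  ext j k
  simp

lemma eval_single_bind₁_toMvPolynomial {σ R : Type*} [CommSemiring R] [Fintype σ] [DecidableEq σ]
    (M : Matrix σ σ R) (i : σ) (F : MvPolynomial σ R) :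
    eval (Pi.single i 1) (bind₁ M.toMvPolynomial F) = eval (M.col i) F := by
  rw [← Matrix.mulVec_single_one, eval, eval₂Hom_bind₁]
  exact congrArg (fun v => eval v F) (funext fun j => M.toMvPolynomial_eval_eq_apply j _)

lemma degreeOf_eq_of_eval_single_ne_zero {σ R : Type*} [CommSemiring R] [DecidableEq σ] {n : ℕ}
    {F : MvPolynomial σ R} (hF : F.IsHomogeneous n) {i : σ} (h : eval (Pi.single i 1) F ≠ 0) :
    F.degreeOf i = n := by
  refine le_antisymm ((degreeOf_le_totalDegree F i).trans hF.totalDegree_le) ?_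
  rw [eval_eq] at h
  obtain ⟨m, hm, hne⟩ := Finset.exists_ne_zero_of_sum_ne_zero h
  have hsupport : m.support ⊆ {i} := fun j hj => by
    by_contra hji
    refine right_ne_zero_of_mul hne (Finset.prod_eq_zero hj ?_)
    rw [Pi.single_eq_of_ne (by simpa using hji), zero_pow (Finsupp.mem_support_iff.1 hj)]
  rw [hF.degree_eq_sum_deg_support hm, Finset.sum_subset hsupport (by simp), Finset.sum_singleton]
  exact monomial_le_degreeOf i hm

lemma irreducible_bind₁_toMvPolynomial {σ R : Type*} [CommSemiring R] [Fintype σ] [DecidableEq σ]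
    {M : Matrix σ σ R} (hM : IsUnit M) {F : MvPolynomial σ R} (hF : Irreducible F) :
    Irreducible (bind₁ M.toMvPolynomial F) := by
  obtain ⟨⟨M, N, hMN, hNM⟩, rfl⟩ := hM
  exact (MulEquiv.irreducible_iff (AlgEquiv.ofAlgHom _ _
    (bind₁_toMvPolynomial_comp_of_mul_eq_one hNM)
    (bind₁_toMvPolynomial_comp_of_mul_eq_one hMN))).2 hF

lemma separable_map_of_irreducible {A : Type*} (L : Type*) [CommRing A] [IsDomain A]
    [IsGCDMonoid A] [Field L] [CharZero L] [Algebra A L] [IsFractionRing A L] {p : Polynomial A}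
    (hp : Irreducible p) (hdeg : p.natDegree ≠ 0) : (p.map (algebraMap A L)).Separable :=
  ((hp.isPrimitive hdeg).irreducible_iff_irreducible_map_fraction_map.1 hp).separable

/-- The dehomogenized restriction of `F` to the line joining `(1 : 0 : 0)` to the generic point
`(0 : v₀ : v₁)` is `F`, viewed as a polynomial in its first variable. -/
lemma aeval_bind₁_generic_eq_map_finSuccEquiv (L : Type*) [Field L] [Algebra K L]
    [Algebra (MvPolynomial (Fin 2) K) L] [IsScalarTower K (MvPolynomial (Fin 2) K) L]
    (F : MvPolynomial (Fin 3) K) {v : Fin 2 → L}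
    (hv : ∀ i, v i = algebraMap (MvPolynomial (Fin 2) K) L (X i)) :
    aeval ![Polynomial.X, 1, 0] (bind₁
      !![1, 0, 0; 0, v 0, 0; 0, v 1, 1].toMvPolynomial (F.map (algebraMap K L))) =
    (finSuccEquiv K 2 F).map (algebraMap (MvPolynomial (Fin 2) K) L) := by
  induction F using MvPolynomial.induction_on with
  | C c => simp [finSuccEquiv_apply, IsScalarTower.algebraMap_apply K (MvPolynomial (Fin 2) K) L]
  | add p q hp hq => simp only [map_add, hp, hq, Polynomial.map_add]
  | mul_X p i hp =>
    rw [map_mul, map_mul, map_mul, map_mul, hp, Polynomial.map_mul, map_X, bind₁_X_right,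
      toMvPolynomial_eq_sum, Fin.sum_univ_three]
    have hy : finSuccEquiv K 2 (X 1) = Polynomial.C (X 0) := finSuccEquiv_X_succ (j := 0)
    have hz : finSuccEquiv K 2 (X 2) = Polynomial.C (X 1) := finSuccEquiv_X_succ (j := 1)
    congr 1
    fin_cases i <;> simp [finSuccEquiv_X_zero, hy, hz, hv]

variable [IsAlgClosed K] [CharZero K]

lemma IsSumOfTwoProducts.of_irreducible_of_eval_single_ne_zero {a b : ℕ} (ha : 0 < a) (hab : a ≤ b)
    {F : MvPolynomial (Fin 3) K} (hF : F.IsHomogeneous (a + b)) (hirr : Irreducible F)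
    (heval : eval (Pi.single 0 1) F ≠ 0) : IsSumOfTwoProducts a b F := by
  let A := MvPolynomial (Fin 2) K
  let L := AlgebraicClosure (FractionRing A)
  have hinj : Function.Injective (algebraMap A L) := by
    rw [IsScalarTower.algebraMap_eq A (FractionRing A) L]
    exact (algebraMap (FractionRing A) L).injective.comp (IsFractionRing.injective _ _)
  let v (i : Fin 2) : L := algebraMap A L (X i)
  have hirr_finSuccEquiv : Irreducible (finSuccEquiv K 2 F) :=
    (MulEquiv.irreducible_iff (finSuccEquiv K 2)).2 hirr
  have hdeg : (finSuccEquiv K 2 F).natDegree = a + b := by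
    rw [natDegree_finSuccEquiv, degreeOf_eq_of_eval_single_ne_zero hF heval]
  have hsep : ((finSuccEquiv K 2 F).map (algebraMap A L)).Separable := by
    have : CharZero (FractionRing A) :=
      charZero_of_injective_algebraMap (FaithfulSMul.algebraMap_injective A (FractionRing A))
    have h := (separable_map_of_irreducible (FractionRing A) hirr_finSuccEquiv (by omega)).map
      (f := algebraMap (FractionRing A) L)
    rwa [Polynomial.map_map, ← IsScalarTower.algebraMap_eq] at h
  have hN : IsUnit !![1, 0, 0; 0, v 0, 0; 0, v 1, 1] := by
    rw [Matrix.isUnit_iff_isUnit_det, isUnit_iff_ne_zero, Matrix.det_fin_three]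
    simpa [v] using (map_ne_zero_iff _ hinj).2 (X_ne_zero (0 : Fin 2))
  have hres := aeval_bind₁_generic_eq_map_finSuccEquiv L F (v := v) fun _ => rfl
  refine .of_map_algebraMap L (.of_bind₁_toMvPolynomial hN (.of_restriction hab ?_ ?_ ?_))
  · exact isHomogeneous_bind₁ (hF.map _) (Matrix.toMvPolynomial_isHomogeneous _)
  · rwa [hres]
  · rw [hres, Polynomial.natDegree_map_eq_of_injective hinj, hdeg]

lemma IsSumOfTwoProducts.of_irreducible {a b : ℕ} (ha : 0 < a) (hab : a ≤ b)
    {F : MvPolynomial (Fin 3) K} (hF : F.IsHomogeneous (a + b)) (hirr : Irreducible F) :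
    IsSumOfTwoProducts a b F := by
  have : Infinite K := IsAlgClosed.instInfinite
  obtain ⟨M, hM, hMF⟩ := exists_isUnit_eval_col_ne_zero hirr.ne_zero 0
  refine .of_bind₁_toMvPolynomial hM (.of_irreducible_of_eval_single_ne_zero ha hab ?_
    (irreducible_bind₁_toMvPolynomial hM hirr) ?_)
  · exact isHomogeneous_bind₁ hF M.toMvPolynomial_isHomogeneous
  · rwa [eval_single_bind₁_toMvPolynomial]

end GenericLine

section ReducibleForms

lemma isUnit_iff_isHomogeneous_zero {σ K : Type*} [Field K] {F : MvPolynomial σ K} (hF : F ≠ 0) :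
    IsUnit F ↔ F.IsHomogeneous 0 := by
  rw [isUnit_iff_totalDegree_of_isReduced, ← totalDegree_zero_iff_isHomogeneous,
    and_iff_right_iff_imp]
  intro hdeg
  rw [totalDegree_eq_zero_iff_eq_C] at hdeg
  exact isUnit_iff_ne_zero.2 fun h => hF (by rw [hdeg, h, C_0])

lemma exists_isHomogeneous_mul_of_not_irreducible {σ K : Type*} [Field K] {n : ℕ} (hn : 0 < n)
    {F : MvPolynomial σ K} (hF : F.IsHomogeneous n) (h0 : F ≠ 0) (hirr : ¬ Irreducible F) :
    ∃ (i j : ℕ) (A B : MvPolynomial σ K), 0 < i ∧ 0 < j ∧ i + j = n ∧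
      A.IsHomogeneous i ∧ B.IsHomogeneous j ∧ F = A * B := by
  have hunit : ¬ IsUnit F := fun h =>
    hn.ne ((isUnit_iff_isHomogeneous_zero h0).1 h |>.inj_right hF h0)
  rw [irreducible_iff] at hirr
  push Not at hirr
  obtain ⟨A, B, rfl, hA, hB⟩ := hirr hunit
  obtain ⟨hA0, hB0⟩ := mul_ne_zero_iff.1 h0
  obtain ⟨i, j, hij, hAi, hBj⟩ := exists_isHomogeneous_of_mul hF hA0 hB0
  have hpos {i : ℕ} {A : MvPolynomial σ K} (hA0 : A ≠ 0) (hA : ¬ IsUnit A)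
      (hAi : A.IsHomogeneous i) : 0 < i :=
    Nat.pos_of_ne_zero fun h => hA ((isUnit_iff_isHomogeneous_zero hA0).2 (h ▸ hAi))
  exact ⟨i, j, A, B, hpos hA0 hA hAi, hpos hB0 hB hBj, hij, hAi, hBj, rfl⟩

lemma IsSumOfTwoProducts.mul_of_forall {σ R : Type*} [CommSemiring R] {i j a b : ℕ}
    (hij : i + j = a + b) (ha : 0 < a) (hb : 0 < b) {A B : MvPolynomial σ R}
    (hAi : A.IsHomogeneous i) (hBj : B.IsHomogeneous j)
    (hA : ∀ a b, 0 < a → 0 < b → a + b = i → IsSumOfTwoProducts a b A)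
    (hB : ∀ a b, 0 < a → 0 < b → a + b = j → IsSumOfTwoProducts a b B) :
    IsSumOfTwoProducts a b (A * B) := by
  rcases lt_trichotomy a i with h | rfl | h
  · have hdec := ((hA (i - a) a (by omega) ha (by omega)).mul_left hBj).symm
    rwa [show j + (i - a) = b by omega, mul_comm] at hdec
  · obtain rfl := Nat.add_left_cancel hij
    exact .mul hAi hBj
  · have hdec := (hB (a - i) b (by omega) hb (by omega)).mul_left hAi
    rwa [show i + (a - i) = a by omega] at hdec

end ReducibleForms

lemma isSumOfTwoProducts_of_isHomogeneous {K : Type*} [Field K] [IsAlgClosed K] [CharZero K]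
    {d : ℕ} {F : MvPolynomial (Fin 3) K} (hF : F.IsHomogeneous d) (a b : ℕ) (ha : 0 < a)
    (hb : 0 < b) (hab : a + b = d) : IsSumOfTwoProducts a b F := by
  induction d using Nat.strong_induction_on generalizing F a b with
  | _ d ih =>
    subst hab
    by_cases h0 : F = 0
    · rw [h0, ← mul_zero 0]
      exact .mul (isHomogeneous_zero _ _ _) (isHomogeneous_zero _ _ _)
    by_cases hirr : Irreducible F
    · rcases le_total a b with h | h
      · exact .of_irreducible ha h hF hirr
      · exact (IsSumOfTwoProducts.of_irreducible hb h (add_comm a b ▸ hF) hirr).symm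
    obtain ⟨i, j, A, B, hi, hj, hij, hA, hB, rfl⟩ :=
      exists_isHomogeneous_mul_of_not_irreducible (by omega) hF h0 hirr
    exact .mul_of_forall hij ha hb hA hB (ih i (by omega) hA) (ih j (by omega) hB)

theorem stmt_17_general {K : Type*} [Field K] [IsAlgClosed K] [CharZero K] (d a : ℕ) (ha : 0 < a)
    (had : a < d) (F : MvPolynomial (Fin 3) K) (hF : F.IsHomogeneous d) :
    ∃ F1 F2 G1 G2 : MvPolynomial (Fin 3) K,
      F1.IsHomogeneous a ∧ F2.IsHomogeneous a ∧
      G1.IsHomogeneous (d - a) ∧ G2.IsHomogeneous (d - a) ∧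
      F = F1 * G1 + F2 * G2 :=
  isSumOfTwoProducts_of_isHomogeneous hF a (d - a) ha (by omega) (by omega)

/-- every ternary form `F` of degree `d` and every `0 < a < d` admit a
decomposition `F = F₁G₁ + F₂G₂` with `deg Fᵢ = a`, `deg Gᵢ = d − a`. -/
theorem stmt_17 (d a : ℕ) (ha : 0 < a) (had : a < d)
    (F : MvPolynomial (Fin 3) ℂ) (hF : F.IsHomogeneous d) :
    ∃ F1 F2 G1 G2 : MvPolynomial (Fin 3) ℂ,
      F1.IsHomogeneous a ∧ F2.IsHomogeneous a ∧
      G1.IsHomogeneous (d - a) ∧ G2.IsHomogeneous (d - a) ∧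
      F = F1 * G1 + F2 * G2 :=
  stmt_17_general d a ha had F hF
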